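/- arXiv:2310.13472 — 5 statements merged into one kernel-verified Lean document; each statement's English description precedes it below -/
import Mathlib

section
/- Let Γ be a group such that every finite-index subgroup Λ of Γ has the following property: every nontrivial normal subgroup of Λ has finite index in Λ. Then either Γ is residually finite, or Γ contains a simple subgroup of finite index (i.e. Γ is virtually simple). -/
/-- If every finite-index subgroup `Λ` of `Γ` has the property that every nontrivial
normal subgroup of `Λ` has finite index in `Λ`, then `Γ` is residually finite or
virtually simple. -/
theorem stmt_0 (Γ : Type*) [Group Γ]
    (h : ∀ Λ : Subgroup Γ, Λ.FiniteIndex →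
      ∀ N : Subgroup Λ, N.Normal → N ≠ ⊥ → N.FiniteIndex) :
    (∀ g : Γ, g ≠ 1 → ∃ N : Subgroup Γ, N.Normal ∧ N.FiniteIndex ∧ g ∉ N) ∨
    (∃ H : Subgroup Γ, H.FiniteIndex ∧ IsSimpleGroup H) := by
  by_cases hrf : ∀ g : Γ, g ≠ 1 → ∃ N : Subgroup Γ, N.Normal ∧ N.FiniteIndex ∧ g ∉ N
  · exact Or.inl hrf
  right
  push Not at hrf
  obtain ⟨g, hg1, hg⟩ := hrf
  let K : Subgroup Γ := sInf {N : Subgroup Γ | N.Normal ∧ N.FiniteIndex}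
  have hKle : ∀ N : Subgroup Γ, N.FiniteIndex → K ≤ N := by
    intro N hN
    have h1 : K ≤ N.normalCore := sInf_le ⟨inferInstance, inferInstance⟩
    exact h1.trans N.normalCore_le
  have hgK : g ∈ K := by
    rw [Subgroup.mem_sInf]
    rintro N ⟨h1, h2⟩
    exact hg N h1 h2
  have hKn : K.Normal := by
    constructor
    intro n hn x
    rw [Subgroup.mem_sInf] at hn ⊢
    rintro N ⟨h1, h2⟩
    exact h1.conj_mem n (hn N ⟨h1, h2⟩) x
  have hKf : K.FiniteIndex := by
    have h1 := h ⊤ inferInstance (K.subgroupOf ⊤) inferInstance (by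
      intro hb
      have : (⟨g, trivial⟩ : (⊤ : Subgroup Γ)) ∈ K.subgroupOf ⊤ := hgK
      rw [hb, Subgroup.mem_bot] at this
      exact hg1 (congrArg Subtype.val this))
    constructor
    have h2 := h1.index_ne_zero
    rwa [← Subgroup.relIndex, Subgroup.relIndex_top_right] at h2
  refine ⟨K, hKf, ?_⟩
  have : Nontrivial K := ⟨⟨⟨g, hgK⟩, 1, fun e => hg1 (congrArg Subtype.val e)⟩⟩
  refine { eq_bot_or_eq_top_of_normal := ?_ }
  intro N hN
  by_cases hb : N = ⊥
  · exact Or.inl hb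
  right
  have hNf := h K hKf N hN hb
  have hM : (N.map K.subtype).FiniteIndex := by
    constructor
    rw [Subgroup.index_map_subtype]
    exact mul_ne_zero hNf.index_ne_zero hKf.index_ne_zero
  rw [eq_top_iff]
  rintro ⟨x, hx⟩ -
  obtain ⟨y, hy, hyx⟩ := hKle _ hM hx
  have : y = ⟨x, hx⟩ := Subtype.ext hyx
  exact this ▸ hy
end

section
/- Let G be a group acting by homeomorphisms on topological spaces Z and Y, with Y Hausdorff. Let p : Z → Y be a continuous, G-equivariant, surjective map. If the action of G on Z is topologically 2-minimal, then either Y has at most one point or p is injective (hence bijective). -/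
/-- If a group `G` acts by homeomorphisms on `Z` and `Y` (with `Y` Hausdorff), acts
topologically 2-minimally on `Z`, and `p : Z → Y` is a continuous equivariant surjection,
then either `Y` has at most one point or `p` is injective. -/
theorem stmt_1 {G Z Y : Type*} [Group G] [TopologicalSpace Z] [TopologicalSpace Y]
    [T2Space Y] [MulAction G Z] [MulAction G Y]
    (hZcont : ∀ g : G, Continuous fun z : Z => g • z)
    (hYcont : ∀ g : G, Continuous fun y : Y => g • y)
    (p : Z → Y) (hp : Continuous p)
    (hequiv : ∀ (g : G) (z : Z), p (g • z) = g • p z)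
    (hsurj : Function.Surjective p)
    (hmin : ∀ x y : Z, x ≠ y → Dense (Set.range fun g : G => (g • x, g • y))) :
    Subsingleton Y ∨ Function.Injective p := by
  by_cases hinj : Function.Injective p
  · exact Or.inr hinj
  left
  have hex : ∃ x y : Z, p x = p y ∧ x ≠ y := by
    simpa [Function.Injective] using hinj
  obtain ⟨x, y, hxy, hne⟩ := hex
  have hcl : IsClosed {w : Z × Z | p w.1 = p w.2} :=
    isClosed_eq (hp.comp continuous_fst) (hp.comp continuous_snd)
  have hsub : (Set.range fun g : G => (g • x, g • y)) ⊆ {w : Z × Z | p w.1 = p w.2} := by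
    rintro _ ⟨g, rfl⟩
    change p (g • x) = p (g • y)
    rw [hequiv, hequiv, hxy]
  refine ⟨fun a b => ?_⟩
  obtain ⟨u, rfl⟩ := hsurj a
  obtain ⟨v, rfl⟩ := hsurj b
  exact closure_minimal hsub hcl (hmin x y hne (u, v))
end

section
/- Let T be a finite nonempty tree (a finite connected acyclic simple graph), and let f be a function from the vertices of T to ℤ such that: (i) |f(x) − f(y)| = 1 whenever x and y are adjacent vertices; and (ii) f(a) + f(c) ≥ 2·f(b) whenever b is a vertex adjacent to two distinct vertices a and c (this is equivalent to f being convex in restriction to every geodesic segment of T). Then there exist a vertex x of T and an integer t such that f(z) = t + dist(x, z) for every vertex z of T, where dist denotes the combinatorial (shortest-path) distance. -/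
theorem stmt_3_aux {V : Type*} (T : SimpleGraph V) (f : V → ℤ)
    (h1 : ∀ x y : V, T.Adj x y → |f x - f y| = 1)
    (h2 : ∀ a b c : V, T.Adj b a → T.Adj b c → a ≠ c → f a + f c ≥ 2 * f b)
    {v w : V} (p : T.Walk v w) : p.IsPath → ∀ u, T.Adj u v → u ∉ p.support →
      f v = f u + 1 → f w = f v + (p.length : ℤ) := by
  induction p with
  | nil => intros; simp
  | @cons a b c h q ih =>
    intro hp u hu hns hf
    rw [SimpleGraph.Walk.cons_isPath_iff] at hp
    have hub : u ≠ b := by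
      rintro rfl
      exact hns (by simp)
    have e1 := h1 a b h
    have e2 := h2 u a b hu.symm h hub
    have e3 : f b = f a + 1 := by
      rcases (abs_eq (by norm_num)).1 e1 with e | e <;> omega
    have := ih hp.1 a h hp.2 e3
    rw [SimpleGraph.Walk.length_cons]
    push_cast
    omega

/-- On a finite nonempty tree, an integer-valued function that changes by exactly `1`
along each edge and is convex on geodesic segments is of the form
`z ↦ t + dist x z` for some vertex `x` and integer `t`. -/
theorem stmt_3 {V : Type*} [Fintype V] [Nonempty V] (T : SimpleGraph V) (hT : T.IsTree)
    (f : V → ℤ)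
    (h1 : ∀ x y : V, T.Adj x y → |f x - f y| = 1)
    (h2 : ∀ a b c : V, T.Adj b a → T.Adj b c → a ≠ c → f a + f c ≥ 2 * f b) :
    ∃ (x : V) (t : ℤ), ∀ z : V, f z = t + (T.dist x z : ℤ) := by
  obtain ⟨x, hx⟩ := Finite.exists_min f
  refine ⟨x, f x, fun z => ?_⟩
  obtain ⟨p, hp, hl⟩ := hT.connected.exists_path_of_dist x z
  rw [← hl]
  cases p with
  | nil => simp
  | @cons _ b _ h q =>
    rw [SimpleGraph.Walk.cons_isPath_iff] at hp
    have e1 := h1 x b h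
    have e2 := hx b
    have e3 : f b = f x + 1 := by
      rcases (abs_eq (by norm_num)).1 e1 with e | e <;> omega
    have := stmt_3_aux T f h1 h2 q hp.1 x h hp.2 e3
    rw [SimpleGraph.Walk.length_cons]
    push_cast
    omega
end

section
/- Fix an integer d ≥ 1 and let X be a d-regular tree. Let Y and Y' be finite nonempty trees all of whose vertices have degree at most d, and let i : Y' → Y be an isometric embedding. Then for every isometric embedding α : Y' → X, the set { β : Y → X | β is an isometric embedding and β ∘ i = α } is finite and nonempty, and its cardinality does not depend on the choice of α. -/
/-- An isometric embedding of simple graphs: an injective map on vertices preserving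
the combinatorial (shortest-path) distance. -/
def IsIsomEmb {A B : Type*} (G : SimpleGraph A) (H : SimpleGraph B) (f : A → B) : Prop :=
  Function.Injective f ∧ ∀ x y : A, H.dist (f x) (f y) = G.dist x y

open SimpleGraph in
lemma near_unique {V : Type*} {G : SimpleGraph V} (hG : G.IsTree) {x u a b : V}
    (ha : G.Adj u a) (hb : G.Adj u b) (h1 : G.dist x u = G.dist x a + 1)
    (h2 : G.dist x u = G.dist x b + 1) : a = b := by
  obtain ⟨p, hp⟩ := hG.connected.exists_walk_length_eq_dist a x
  obtain ⟨q, hq⟩ := hG.connected.exists_walk_length_eq_dist b x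
  have hp' : (Walk.cons ha p).IsPath :=
    Walk.isPath_of_length_eq_dist _ (by
      rw [Walk.length_cons, hp, G.dist_comm (u := a), G.dist_comm (u := u), h1])
  have hq' : (Walk.cons hb q).IsPath :=
    Walk.isPath_of_length_eq_dist _ (by
      rw [Walk.length_cons, hq, G.dist_comm (u := b), G.dist_comm (u := u), h2])
  have := (hG.existsUnique_path u x).unique hp' hq'
  have h3 := congrArg (fun w => Walk.snd w) this
  simpa using h3

open SimpleGraph in
lemma near_exists {V : Type*} {G : SimpleGraph V} (hG : G.IsTree) {x u : V} (h : u ≠ x) :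
    ∃ a, G.Adj u a ∧ G.dist x u = G.dist x a + 1 := by
  obtain ⟨p, hp⟩ := hG.connected.exists_walk_length_eq_dist u x
  cases p with
  | nil => exact absurd rfl h
  | @cons _ a _ ha p =>
    refine ⟨a, ha, ?_⟩
    have h1 := G.dist_le p
    rw [Walk.length_cons] at hp
    rw [G.dist_comm (u := u)] at hp
    rw [G.dist_comm (u := a)] at h1
    rcases hG.dist_eq_dist_add_one_of_adj x ha with h | h <;> omega

/-- Geodesic convexity of a vertex set. -/
def GConv {V : Type*} (G : SimpleGraph V) (S : Set V) : Prop :=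
  ∀ u ∈ S, ∀ x ∈ S, u ≠ x → ∃ a ∈ S, G.Adj u a ∧ G.dist x u = G.dist x a + 1

lemma conv_far {V : Type*} {G : SimpleGraph V} (hG : G.IsTree) {S : Set V} (hS : GConv G S)
    {u v : V} (hu : u ∈ S) (hv : v ∉ S) (huv : G.Adj u v) {x : V} (hx : x ∈ S) :
    G.dist x v = G.dist x u + 1 := by
  rcases hG.dist_eq_dist_add_one_of_adj x huv with h | h
  · exfalso
    have hne : u ≠ x := by
      rintro rfl
      simp at h
    obtain ⟨a, haS, ha, h'⟩ := hS u hu x hx hne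
    exact hv (near_unique hG huv ha h h' ▸ haS)
  · exact h

lemma conv_insert {V : Type*} {G : SimpleGraph V} (hG : G.IsTree) {S : Set V} (hS : GConv G S)
    {u v : V} (hu : u ∈ S) (hv : v ∉ S) (huv : G.Adj u v) : GConv G (insert v S) := by
  rintro a (rfl | ha) x (rfl | hx) hne
  · exact absurd rfl hne
  · exact ⟨u, Or.inr hu, huv.symm, conv_far hG hS hu hv huv hx⟩
  · by_cases hau : a = u
    · subst hau
      refine ⟨x, Or.inl rfl, huv, ?_⟩
      rw [G.dist_self, SimpleGraph.dist_eq_one_iff_adj.2 huv.symm]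
    · obtain ⟨b, hb, hab, h⟩ := hS a ha u hu hau
      refine ⟨b, Or.inr hb, hab, ?_⟩
      rw [G.dist_comm, G.dist_comm (u := x), conv_far hG hS hu hv huv ha,
        conv_far hG hS hu hv huv hb, G.dist_comm, h, G.dist_comm (u := u)]
  · obtain ⟨b, hb, hab, h⟩ := hS a ha x hx hne
    exact ⟨b, Or.inr hb, hab, h⟩

/-- Distance preservation on a set. -/
def IsoOn {A B : Type*} (G : SimpleGraph A) (H : SimpleGraph B) (S : Set A) (f : A → B) : Prop :=
  ∀ x ∈ S, ∀ y ∈ S, H.dist (f x) (f y) = G.dist x y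

lemma IsoOn.injOn {A B : Type*} {G : SimpleGraph A} {H : SimpleGraph B} {S : Set A} {f : A → B}
    (hG : G.Connected) (h : IsoOn G H S f) : Set.InjOn f S := by
  intro x hx y hy hxy
  have := h x hx y hy
  rw [hxy, H.dist_self] at this
  exact hG.dist_eq_zero_iff.1 this.symm

/-- Extensions of `γ|S`. -/
def ExtSet {A B : Type*} (G : SimpleGraph A) (H : SimpleGraph B) (S : Set A) (γ : A → B) :
    Set (A → B) := {β | IsIsomEmb G H β ∧ Set.EqOn β γ S}

/-- Admissible images for the new vertex. -/
def Adm {A B : Type*} (G : SimpleGraph A) (H : SimpleGraph B) (S : Set A) (γ : A → B) (u : A) :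
    Set B := H.neighborSet (γ u) \ γ '' (S ∩ G.neighborSet u)

open Classical in
lemma isoOn_update {A B : Type*} {G : SimpleGraph A} {H : SimpleGraph B} (hG : G.IsTree)
    (hH : H.IsTree) {S : Set A} (hS : GConv G S) {u v : A} (hu : u ∈ S) (hv : v ∉ S)
    (huv : G.Adj u v) {γ : A → B} (hγ : IsoOn G H S γ) {w : B} (hw : w ∈ Adm G H S γ u) :
    IsoOn G H (insert v S) (Function.update γ v w) := by
  have key : ∀ x ∈ S, H.dist (γ x) w = G.dist x v := by
    intro x hx
    rw [conv_far hG hS hu hv huv hx, ← hγ x hx u hu]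
    rcases hH.dist_eq_dist_add_one_of_adj (γ x) hw.1 with h | h
    · exfalso
      have hne : u ≠ x := by
        rintro rfl
        simp at h
      obtain ⟨a, haS, ha, h'⟩ := hS u hu x hx hne
      have hadj : H.Adj (γ u) (γ a) := by
        rw [← SimpleGraph.dist_eq_one_iff_adj, hγ u hu a haS,
          SimpleGraph.dist_eq_one_iff_adj.2 ha]
      rw [← hγ x hx u hu, ← hγ x hx a haS] at h'
      exact hw.2 ⟨a, ⟨haS, ha⟩, near_unique hH hadj hw.1 h' h⟩
    · exact h
  have hne : ∀ x ∈ S, x ≠ v := fun x hx h => hv (h ▸ hx)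
  rintro x (rfl | hx) y (rfl | hy)
  · simp
  · rw [Function.update_self, Function.update_of_ne (hne y hy), H.dist_comm, key y hy, G.dist_comm]
  · rw [Function.update_self, Function.update_of_ne (hne x hx), key x hx]
  · rw [Function.update_of_ne (hne x hx), Function.update_of_ne (hne y hy), hγ x hx y hy]

open Classical in
lemma extSet_eq {A B : Type*} {G : SimpleGraph A} {H : SimpleGraph B}
    {S : Set A} {u v : A} (hu : u ∈ S) (hv : v ∉ S) (huv : G.Adj u v) (γ : A → B) :
    ExtSet G H S γ = ⋃ w ∈ Adm G H S γ u, ExtSet G H (insert v S) (Function.update γ v w) := by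
  have hne : ∀ x ∈ S, x ≠ v := fun x hx h => hv (h ▸ hx)
  ext β
  simp only [Set.mem_iUnion, exists_prop]
  constructor
  · rintro ⟨hβ, he⟩
    refine ⟨β v, ⟨?_, ?_⟩, hβ, ?_⟩
    · rw [SimpleGraph.mem_neighborSet, ← he hu, ← SimpleGraph.dist_eq_one_iff_adj, hβ.2,
        SimpleGraph.dist_eq_one_iff_adj]
      exact huv
    · rintro ⟨a, ⟨ha, -⟩, h⟩
      rw [← he ha] at h
      exact hne a ha (hβ.1 h)
    · rintro x (rfl | hx)
      · simp
      · rw [Function.update_of_ne (hne x hx), he hx]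
  · rintro ⟨w, -, hβ, he⟩
    refine ⟨hβ, fun x hx => ?_⟩
    rw [he (Or.inr hx), Function.update_of_ne (hne x hx)]

lemma main_ind {A B : Type*} [Finite A] {G : SimpleGraph A} {H : SimpleGraph B} (hG : G.IsTree)
    (hH : H.IsTree) (d : ℕ) [G.LocallyFinite] [H.LocallyFinite] (hdeg : ∀ v, G.degree v ≤ d)
    (hreg : H.IsRegularOfDegree d) (n : ℕ) :
    ∀ S : Set A, S.Nonempty → GConv G S → Sᶜ.ncard = n →
    ∃ N : ℕ, 0 < N ∧ ∀ γ : A → B, IsoOn G H S γ →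
      (ExtSet G H S γ).Finite ∧ (ExtSet G H S γ).ncard = N := by
  classical
  induction n with
  | zero =>
    intro S _ _ hc
    have hS : S = Set.univ := by
      rwa [Set.ncard_eq_zero, Set.compl_empty_iff] at hc
    subst hS
    refine ⟨1, one_pos, fun γ hγ => ?_⟩
    have : ExtSet G H Set.univ γ = {γ} := by
      ext β
      constructor
      · rintro ⟨-, h⟩
        exact funext fun x => h (Set.mem_univ x)
      · rintro rfl
        exact ⟨⟨Set.injOn_univ.1 (hγ.injOn hG.connected),
          fun x y => hγ x trivial y trivial⟩, fun x _ => rfl⟩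
    rw [this]
    simp
  | succ n ih =>
    intro S ⟨s, hs⟩ hS hc
    obtain ⟨t, ht⟩ : Sᶜ.Nonempty := by
      rw [← Set.ncard_pos]; omega
    obtain ⟨p⟩ := hG.connected s t
    obtain ⟨⟨⟨u, v⟩, huv⟩, -, hu, hv⟩ := p.exists_boundary_dart S hs ht
    simp only at hu hv huv
    have hcard : (insert v S)ᶜ.ncard = n := by
      have h1 : (insert v S)ᶜ = Sᶜ \ {v} := by
        ext x; simp [and_comm]
      rw [h1, Set.ncard_sdiff_singleton_of_mem hv, hc]; rfl
    obtain ⟨N, hN, hE⟩ := ih (insert v S) ⟨v, Or.inl rfl⟩ (conv_insert hG hS hu hv huv) hcard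
    have hlt : (S ∩ G.neighborSet u).ncard < d := by
      refine lt_of_lt_of_le ?_ (hdeg u)
      have h1 : (G.neighborSet u).ncard = G.degree u := by
        rw [← SimpleGraph.card_neighborSet_eq_degree, Set.ncard_eq_toFinset_card',
          Set.toFinset_card]
      rw [← h1]
      exact Set.ncard_lt_ncard ⟨Set.inter_subset_right, fun h => hv (h huv).1⟩
    refine ⟨(d - (S ∩ G.neighborSet u).ncard) * N, Nat.mul_pos (by omega) hN, fun γ hγ => ?_⟩
    have hfin : (H.neighborSet (γ u)).Finite := Set.toFinite _
    have hAfin : (Adm G H S γ u).Finite := hfin.subset Set.sdiff_subset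
    have hA : (Adm G H S γ u).ncard = d - (S ∩ G.neighborSet u).ncard := by
      have h1 : (H.neighborSet (γ u)).ncard = d := by
        rw [← hreg (γ u), ← SimpleGraph.card_neighborSet_eq_degree, Set.ncard_eq_toFinset_card',
          Set.toFinset_card]
      unfold Adm
      rw [Set.ncard_sdiff _ (Set.toFinite _), h1, Set.ncard_image_of_injOn
        ((hγ.injOn hG.connected).mono Set.inter_subset_left)]
      rintro _ ⟨a, ⟨ha, hua⟩, rfl⟩
      rw [SimpleGraph.mem_neighborSet, ← SimpleGraph.dist_eq_one_iff_adj, hγ u hu a ha,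
        SimpleGraph.dist_eq_one_iff_adj]
      exact hua
    have hE' := fun w (hw : w ∈ Adm G H S γ u) => hE _ (isoOn_update hG hH hS hu hv huv hγ hw)
    rw [extSet_eq hu hv huv γ]
    refine ⟨hAfin.biUnion fun w hw => (hE' w hw).1, ?_⟩
    rw [hAfin.ncard_biUnion (fun w hw => (hE' w hw).1)]
    · rw [finsum_mem_congr rfl (fun w hw => (hE' w hw).2), finsum_mem_eq_finite_toFinset_sum _ hAfin,
        Finset.sum_const, ← Set.ncard_eq_toFinset_card _ hAfin, hA, smul_eq_mul]
    · intro w _ w' _ hww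
      refine Set.disjoint_left.2 ?_
      rintro β ⟨-, h1⟩ ⟨-, h2⟩
      apply hww
      have h3 := h1 (Set.mem_insert v S)
      have h4 := h2 (Set.mem_insert v S)
      rw [Function.update_self] at h3 h4
      rw [← h3, h4]

/-- A `d`-regular tree is `P`-symmetric for `P` = "tree of degrees bounded by `d`":
given finite nonempty trees `Y', Y` of max degree `≤ d`, an isometric embedding
`i : Y' → Y`, and an isometric embedding `α : Y' → X`, the set of isometric embeddings
`β : Y → X` with `β ∘ i = α` is finite and nonempty, of cardinality independent of `α`. -/
theorem stmt_4 {W VY VY' : Type*} (d : ℕ) (hd : 1 ≤ d)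
    (X : SimpleGraph W) (hXtree : X.IsTree) [X.LocallyFinite]
    (hXreg : X.IsRegularOfDegree d)
    [Fintype VY] [Nonempty VY] (Y : SimpleGraph VY) (hYtree : Y.IsTree)
    [Y.LocallyFinite] (hYdeg : ∀ v : VY, Y.degree v ≤ d)
    [Fintype VY'] [Nonempty VY'] (Y' : SimpleGraph VY') (hY'tree : Y'.IsTree)
    [Y'.LocallyFinite] (hY'deg : ∀ v : VY', Y'.degree v ≤ d)
    (i : VY' → VY) (hi : IsIsomEmb Y' Y i) :
    (∀ α : VY' → W, IsIsomEmb Y' X α →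
      {β : VY → W | IsIsomEmb Y X β ∧ β ∘ i = α}.Finite ∧
      {β : VY → W | IsIsomEmb Y X β ∧ β ∘ i = α}.Nonempty) ∧
    (∀ α α' : VY' → W, IsIsomEmb Y' X α → IsIsomEmb Y' X α' →
      {β : VY → W | IsIsomEmb Y X β ∧ β ∘ i = α}.ncard =
      {β : VY → W | IsIsomEmb Y X β ∧ β ∘ i = α'}.ncard) := by
  classical
  have hconv : GConv Y (Set.range i) := by
    rintro _ ⟨a, rfl⟩ _ ⟨b, rfl⟩ hne
    obtain ⟨c, hc, h⟩ := near_exists hY'tree (x := b) (u := a) (fun h => hne (h ▸ rfl))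
    refine ⟨i c, ⟨c, rfl⟩, ?_, ?_⟩
    · rw [← SimpleGraph.dist_eq_one_iff_adj, hi.2, SimpleGraph.dist_eq_one_iff_adj]
      exact hc
    · rw [hi.2, hi.2, h]
  obtain ⟨N, hN, hE⟩ := main_ind hYtree hXtree d hYdeg hXreg _ (Set.range i)
    (Set.range_nonempty i) hconv rfl
  have key : ∀ α : VY' → W, IsIsomEmb Y' X α →
      {β : VY → W | IsIsomEmb Y X β ∧ β ∘ i = α}.Finite ∧
      {β : VY → W | IsIsomEmb Y X β ∧ β ∘ i = α}.ncard = N := by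
    intro α hα
    have w0 : W := α (Classical.arbitrary VY')
    have hγ : ∀ a, Function.extend i α (fun _ => w0) (i a) = α a :=
      fun a => hi.1.extend_apply α _ a
    have h1 : IsoOn Y X (Set.range i) (Function.extend i α (fun _ => w0)) := by
      rintro _ ⟨a, rfl⟩ _ ⟨b, rfl⟩
      rw [hγ, hγ, hα.2, hi.2]
    have h2 : {β : VY → W | IsIsomEmb Y X β ∧ β ∘ i = α} =
        ExtSet Y X (Set.range i) (Function.extend i α (fun _ => w0)) := by
      ext β
      refine and_congr_right fun _ => ⟨?_, fun h => ?_⟩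
      · rintro rfl _ ⟨a, rfl⟩
        rw [hγ]; rfl
      · funext a
        exact (h ⟨a, rfl⟩).trans (hγ a)
    rw [h2]
    exact hE _ h1
  refine ⟨fun α hα => ⟨(key α hα).1, ?_⟩, fun α α' hα hα' => ?_⟩
  · apply Set.nonempty_of_ncard_ne_zero
    rw [(key α hα).2]; omega
  · rw [(key α hα).2, (key α' hα').2]
end

section
/- Fix an integer d ≥ 1 and let X be a d-regular tree. Let Y be a finite nonempty tree all of whose vertices have degree at most d. Then for any two vertices y, y' of Y and any two vertices o, o' of X, the number of isometric embeddings β : Y → X with β(y) = o equals the number of isometric embeddings β : Y → X with β(y') = o' (and both are finite and positive). -/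
universe u

/-- Injective graph homomorphisms. -/
def InjHom {A B : Type*} (G : SimpleGraph A) (H : SimpleGraph B) (f : A → B) : Prop :=
  Function.Injective f ∧ ∀ x y : A, G.Adj x y → H.Adj (f x) (f y)

theorem tree_path_length {V : Type*} {G : SimpleGraph V} (h : G.IsTree) {u v : V}
    (p : G.Walk u v) (hp : p.IsPath) : p.length = G.dist u v := by
  obtain ⟨q, hq, hl⟩ := h.connected.exists_path_of_dist u v
  rw [← hl, (h.existsUnique_path u v).unique hp hq]

theorem isIsomEmb_iff {A B : Type*} {G : SimpleGraph A} {H : SimpleGraph B}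
    (hG : G.IsTree) (hH : H.IsTree) (f : A → B) : IsIsomEmb G H f ↔ InjHom G H f := by
  constructor
  · rintro ⟨hi, hd⟩
    refine ⟨hi, fun x y hxy => ?_⟩
    rw [← SimpleGraph.dist_eq_one_iff_adj, hd, SimpleGraph.dist_eq_one_iff_adj]
    exact hxy
  · rintro ⟨hi, ha⟩
    refine ⟨hi, fun x y => ?_⟩
    obtain ⟨q, hq, hl⟩ := hG.connected.exists_path_of_dist x y
    let φ : G →g H := ⟨f, fun {a b} h => ha a b h⟩
    have h2 : (q.map φ).IsPath := hq.map (f := φ) hi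
    have h3 := tree_path_length hH _ h2
    rw [SimpleGraph.Walk.length_map, hl] at h3
    exact h3.symm

theorem count_fibers {A B : Type*} (f : A → B) (n k : ℕ) (hB : Nonempty (B ≃ Fin n))
    (hf : ∀ b, Nonempty ({a // f a = b} ≃ Fin k)) : Nonempty (A ≃ Fin (n * k)) := by
  obtain ⟨e⟩ := hB
  exact ⟨(Equiv.sigmaFiberEquiv f).symm.trans
    ((Equiv.sigmaEquivProdOfEquiv fun b => (hf b).some).trans
      ((Equiv.prodCongr e (Equiv.refl _)).trans finProdFinEquiv))⟩

theorem set_equiv_fin {A : Type*} (s : Set A) (hs : s.Finite) (k : ℕ) (h : s.ncard = k) :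
    Nonempty (s ≃ Fin k) := by
  have := hs.to_subtype
  rw [← Nat.card_coe_set_eq] at h
  exact ⟨Finite.equivFinOfCardEq h⟩

theorem leaf_step {W V : Type*} [Finite V] (d : ℕ) (X : SimpleGraph W) (hX : X.IsTree)
    (hXf : ∀ w, (X.neighborSet w).Finite) (hXd : ∀ w, (X.neighborSet w).ncard = d)
    (Y : SimpleGraph V) (l p : V) (hpl : p ≠ l) (hl : ∀ q, Y.Adj l q ↔ q = p)
    (hT : (Y.induce {l}ᶜ).IsTree) (n : ℕ) (y : V) (hy : y ≠ l) (o : W)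
    (hn : Nonempty ({β : ({l}ᶜ : Set V) → W //
      InjHom (Y.induce {l}ᶜ) X β ∧ β ⟨y, hy⟩ = o} ≃ Fin n)) :
    Nonempty ({β : V → W // InjHom Y X β ∧ β y = o} ≃
      Fin (n * (d - ((Y.induce {l}ᶜ).neighborSet ⟨p, hpl⟩).ncard))) := by
  classical
  let r : {β : V → W // InjHom Y X β ∧ β y = o} → {β : ({l}ᶜ : Set V) → W //
      InjHom (Y.induce {l}ᶜ) X β ∧ β ⟨y, hy⟩ = o} := fun β =>
    ⟨fun v => β.1 v.1, ⟨fun a b h => Subtype.ext (β.2.1.1 h), fun a b h => β.2.1.2 _ _ h⟩, β.2.2⟩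
  refine count_fibers r _ _ hn ?_
  rintro ⟨γ, hγ, hγo⟩
  let S : Set W := X.neighborSet (γ ⟨p, hpl⟩) \ γ '' ((Y.induce {l}ᶜ).neighborSet ⟨p, hpl⟩)
  have hiso := (isIsomEmb_iff hT hX γ).2 hγ
  have hSc : S.ncard = d - ((Y.induce {l}ᶜ).neighborSet ⟨p, hpl⟩).ncard := by
    rw [Set.ncard_sdiff, hXd, Set.ncard_image_of_injective _ hγ.1]
    · rintro _ ⟨q, hq, rfl⟩
      exact hγ.2 _ _ hq
  have hSr : ∀ w ∈ S, ∀ v, γ v ≠ w := by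
    rintro _ ⟨h1, h2⟩ v rfl
    refine h2 ⟨v, ?_, rfl⟩
    rw [SimpleGraph.mem_neighborSet, ← SimpleGraph.dist_eq_one_iff_adj] at h1 ⊢
    rw [← hiso.2, h1]
  obtain ⟨e⟩ := set_equiv_fin S ((hXf _).subset Set.sdiff_subset) _ hSc
  refine ⟨Equiv.trans ?_ e⟩
  have key : ∀ β : V → W, (∀ v (hv : v ≠ l), β v = γ ⟨v, hv⟩) → β l ∈ S → InjHom Y X β := by
    intro β h1 h2
    constructor
    · intro a b hab
      by_cases ha : a = l <;> by_cases hb : b = l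
      · rw [ha, hb]
      · rw [ha, h1 b hb] at hab
        exact absurd hab.symm (hSr _ h2 _)
      · rw [hb, h1 a ha] at hab
        exact absurd hab (hSr _ h2 _)
      · rw [h1 a ha, h1 b hb] at hab
        exact congrArg Subtype.val (hγ.1 hab)
    · intro a b hab
      by_cases ha : a = l <;> by_cases hb : b = l
      · rw [ha, hb] at hab
        exact absurd rfl hab.ne
      · subst ha
        obtain rfl := (hl b).1 hab
        rw [h1 b hb]
        exact (h2.1 : X.Adj _ _).symm
      · subst hb
        obtain rfl := (hl a).1 hab.symm
        rw [h1 a ha]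
        exact h2.1
      · rw [h1 a ha, h1 b hb]
        exact hγ.2 _ _ hab
  refine
    { toFun := fun β => ⟨β.1.1 l, ?_⟩
      invFun := fun w => ⟨⟨fun v => if hv : v = l then w.1 else γ ⟨v, hv⟩, ?_, ?_⟩, ?_⟩
      left_inv := ?_
      right_inv := ?_ }
  · obtain ⟨⟨β, hβ, hβo⟩, hr⟩ := β
    have hr' : (fun v : ({l}ᶜ : Set V) => β v.1) = γ := congrArg Subtype.val hr
    subst hr'
    refine ⟨hβ.2 _ _ ((hl p).2 rfl).symm, ?_⟩
    rintro ⟨q, _, hq⟩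
    exact q.2 (hβ.1 hq)
  · refine key _ (fun v hv => by simp [hv]) ?_
    simp only [dif_pos]
    exact w.2
  · simpa [hy] using hγo
  · refine Subtype.ext (funext fun v => ?_)
    have : v.1 ≠ l := v.2
    simp [r, this]
  · rintro ⟨⟨β, hβ, hβo⟩, hr⟩
    have hr' : (fun v : ({l}ᶜ : Set V) => β v.1) = γ := congrArg Subtype.val hr
    subst hr'
    refine Subtype.ext (Subtype.ext (funext fun v => ?_))
    by_cases hv : v = l <;> simp [hv]
  · rintro ⟨w, hw⟩
    simp

theorem main_count {W : Type*} (d : ℕ) (X : SimpleGraph W) (hX : X.IsTree)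
    (hXf : ∀ w, (X.neighborSet w).Finite) (hXd : ∀ w, (X.neighborSet w).ncard = d) (m : ℕ) :
    ∀ (V : Type u) [Finite V] (Y : SimpleGraph V), Nat.card V = m → Y.IsTree →
      (∀ v, (Y.neighborSet v).ncard ≤ d) →
      ∃ N : ℕ, 0 < N ∧ (m = 1 → N = 1) ∧
        ∀ y o, Nonempty ({β : V → W // InjHom Y X β ∧ β y = o} ≃ Fin N) := by
  induction m with
  | zero =>
    intro V _ Y hc hY _
    have := hY.connected.nonempty
    exact absurd hc Nat.card_pos.ne'
  | succ m ih =>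
    intro V _ Y hc hY hdeg
    classical
    rcases Nat.eq_zero_or_pos m with rfl | hm
    · have hs : Subsingleton V := (Nat.card_eq_one_iff_unique.1 hc).1
      refine ⟨1, one_pos, fun _ => rfl, fun y o => ⟨?_⟩⟩
      have : Unique {β : V → W // InjHom Y X β ∧ β y = o} :=
        { default := ⟨fun _ => o, ⟨fun a b _ => Subsingleton.elim a b,
            fun a b h => absurd (Subsingleton.elim a b) h.ne⟩, rfl⟩
          uniq := by
            rintro ⟨β, h1, h2⟩
            refine Subtype.ext (funext fun v => ?_)
            rw [Subsingleton.elim v y]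
            exact h2 }
      exact Equiv.ofUnique _ _
    · have hnt : Nontrivial V := Finite.one_lt_card_iff_nontrivial.1 (by omega)
      have := Fintype.ofFinite V
      -- one leaf
      have step : ∀ l, Y.degree l = 1 → ∃ N : ℕ, 0 < N ∧ (m = 1 → N = d) ∧
          ∀ y o, y ≠ l → Nonempty ({β : V → W // InjHom Y X β ∧ β y = o} ≃ Fin N) := by
        intro l hl
        have hconn := hY.connected.induce_compl_singleton_of_degree_eq_one hl
        have hT : (Y.induce {l}ᶜ).IsTree := ⟨hconn, hY.isAcyclic.induce _⟩
        obtain ⟨p, hp, hu⟩ := SimpleGraph.degree_eq_one_iff_existsUnique_adj.mp hl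
        have hle : ∀ v : ({l}ᶜ : Set V), ((Y.induce {l}ᶜ).neighborSet v).ncard ≤
            (Y.neighborSet v.1 \ {l}).ncard := by
          intro v
          rw [← Set.ncard_image_of_injective _ Subtype.val_injective]
          refine Set.ncard_le_ncard ?_ (Set.toFinite _)
          rintro _ ⟨q, hq, rfl⟩
          exact ⟨hq, q.2⟩
        have hcard : Nat.card ({l}ᶜ : Set V) = m := by
          rw [Nat.card_coe_set_eq, Set.ncard_compl, hc, Set.ncard_singleton]
          rfl
        obtain ⟨N, hN, hN1, hNe⟩ := ih ({l}ᶜ : Set V) (Y.induce {l}ᶜ) hcard hT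
          (fun v => (hle v).trans ((Set.ncard_le_ncard Set.sdiff_subset (Set.toFinite _)).trans
            (hdeg _)))
        have hpl : p ≠ l := hp.ne'
        have hlt : ((Y.induce {l}ᶜ).neighborSet ⟨p, hpl⟩).ncard < d :=
          lt_of_lt_of_le (lt_of_le_of_lt (hle ⟨p, hpl⟩)
            (Set.ncard_sdiff_singleton_lt_of_mem hp.symm (Set.toFinite _))) (hdeg p)
        refine ⟨_, Nat.mul_pos hN (Nat.sub_pos_of_lt hlt), ?_, fun y o hy =>
          leaf_step d X hX hXf hXd Y l p hpl (fun q => ⟨hu q, fun h => h ▸ hp⟩) hT N y hy o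
            (hNe _ _)⟩
        intro hm1
        have hs : Subsingleton ({l}ᶜ : Set V) :=
          (Nat.card_eq_one_iff_unique.1 (hcard.trans hm1)).1
        have h0 : (Y.induce {l}ᶜ).neighborSet ⟨p, hpl⟩ = ∅ := by
          ext q
          simp only [SimpleGraph.mem_neighborSet, Set.mem_empty_iff_false, iff_false]
          exact fun h => h.ne (Subsingleton.elim _ _)
        rw [hN1 hm1, h0]
        simp
      obtain ⟨l₁, l₂, hne, h1, h2⟩ := hY.exists_ne_and_degree_eq_one
      obtain ⟨N₁, hp1, hd1, he1⟩ := step l₁ h1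
      obtain ⟨N₂, hp2, hd2, he2⟩ := step l₂ h2
      have hNN : N₁ = N₂ := by
        by_cases hm1 : m = 1
        · rw [hd1 hm1, hd2 hm1]
        · have : ({l₁, l₂} : Finset V).card < Fintype.card V := by
            rw [Finset.card_pair hne, ← Nat.card_eq_fintype_card]
            omega
          obtain ⟨z, hz⟩ := Finset.exists_mem_notMem_of_card_lt_card
            (s := {l₁, l₂}) (t := Finset.univ) (by simpa using this)
          simp only [Finset.mem_insert, Finset.mem_singleton, not_or] at hz
          obtain ⟨o⟩ := hX.connected.nonempty
          obtain ⟨a⟩ := he1 z o hz.2.1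
          obtain ⟨b⟩ := he2 z o hz.2.2
          exact Fin.equiv_iff_eq.1 ⟨a.symm.trans b⟩
      refine ⟨N₁, hp1, fun h => by omega, fun y o => ?_⟩
      by_cases hy : y = l₁
      · rw [hNN]
        exact he2 y o (hy ▸ hne)
      · exact he1 y o hy

/-- In a `d`-regular tree `X`, for a finite nonempty tree `Y` of max degree `≤ d`,
the number of isometric embeddings `β : Y → X` with `β y = o` is finite, positive, and
independent of the choice of the vertex `y` of `Y` and of the vertex `o` of `X`. -/
theorem stmt_5 {W VY : Type*} (d : ℕ) (hd : 1 ≤ d)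
    (X : SimpleGraph W) (hXtree : X.IsTree) [X.LocallyFinite]
    (hXreg : X.IsRegularOfDegree d)
    [Fintype VY] [Nonempty VY] (Y : SimpleGraph VY) (hYtree : Y.IsTree)
    [Y.LocallyFinite] (hYdeg : ∀ v : VY, Y.degree v ≤ d)
    (y y' : VY) (o o' : W) :
    ({β : VY → W | IsIsomEmb Y X β ∧ β y = o}.Finite ∧
      {β : VY → W | IsIsomEmb Y X β ∧ β y = o}.Nonempty) ∧
    ({β : VY → W | IsIsomEmb Y X β ∧ β y' = o'}.Finite ∧
      {β : VY → W | IsIsomEmb Y X β ∧ β y' = o'}.Nonempty) ∧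
    {β : VY → W | IsIsomEmb Y X β ∧ β y = o}.ncard =
      {β : VY → W | IsIsomEmb Y X β ∧ β y' = o'}.ncard := by
  have hXf : ∀ w, (X.neighborSet w).Finite := fun w => Set.toFinite _
  have hXd : ∀ w, (X.neighborSet w).ncard = d := fun w => by
    rw [← hXreg w, ← SimpleGraph.card_neighborSet_eq_degree, ← Nat.card_eq_fintype_card,
      Nat.card_coe_set_eq]
  have hYd : ∀ v, (Y.neighborSet v).ncard ≤ d := fun v => by
    refine le_trans (le_of_eq ?_) (hYdeg v)
    rw [← SimpleGraph.card_neighborSet_eq_degree, ← Nat.card_eq_fintype_card,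
      Nat.card_coe_set_eq]
  obtain ⟨N, hN, -, hE⟩ := main_count d X hXtree hXf hXd _ VY Y rfl hYtree hYd
  have key : ∀ (z : VY) (w : W), ({β : VY → W | IsIsomEmb Y X β ∧ β z = w}.Finite ∧
      {β : VY → W | IsIsomEmb Y X β ∧ β z = w}.Nonempty) ∧
      {β : VY → W | IsIsomEmb Y X β ∧ β z = w}.ncard = N := by
    intro z w
    obtain ⟨e⟩ := hE z w
    simp only [isIsomEmb_iff hYtree hXtree]
    have hc : {β : VY → W | InjHom Y X β ∧ β z = w}.ncard = N := by
      rw [← Nat.card_coe_set_eq, ← Nat.card_fin N]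
      exact Nat.card_congr e
    refine ⟨⟨Set.finite_of_ncard_pos (hc ▸ hN), Set.nonempty_of_ncard_ne_zero (by omega)⟩, hc⟩
  exact ⟨(key y o).1, (key y' o').1, (key y o).2.trans (key y' o').2.symm⟩
end
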